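/- arXiv:2003.07061 — 3 statements merged into one kernel-verified Lean document; each statement's English description precedes it below -/
import Mathlib

section
/- For every positive integer t and every ε ∈ (0, 1/2], every finite hypergraph on at least t·⌈1/ε⌉ vertices with VC-dimension 1 admits an ε-t-net of size at most t·⌈1/ε⌉ + 1. -/
/-- `A` is shattered by the hyperedge family `E`. -/
def Shatters {V : Type*} [DecidableEq V] (E : Finset (Finset V)) (A : Finset V) : Prop :=
  ∀ B ⊆ A, ∃ e ∈ E, A ∩ e = B

/-- The hypergraph with hyperedge family `E` has VC-dimension exactly `d`. -/
def IsVCDim {V : Type*} [DecidableEq V] (E : Finset (Finset V)) (d : ℕ) : Prop :=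
  (∃ A : Finset V, Shatters E A ∧ A.card = d) ∧
  ∀ A : Finset V, Shatters E A → A.card ≤ d

/-- `S` is an `ε`-`t`-net for the hypergraph with vertex set `V` and hyperedges `E`. -/
def IsEpsTNet {V : Type*} [Fintype V] (E : Finset (Finset V)) (ε : ℝ) (t : ℕ)
    (S : Finset (Finset V)) : Prop :=
  (∀ s ∈ S, s.card = t) ∧
  ∀ e ∈ E, ε * (Fintype.card V : ℝ) ≤ (e.card : ℝ) → ∃ s ∈ S, s ⊆ e

/-- choose the `t` lightest classes -/
lemma light_classes {ι : Type*} [DecidableEq ι] (K : Finset ι) (f : ι → ℕ) (d : ℕ) :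
    ∀ t, t + d = K.card → ∃ R ⊆ K, R.card = t ∧ K.card * ∑ r ∈ R, f r ≤ t * ∑ r ∈ K, f r := by
  induction d with
  | zero => intro t h; exact ⟨K, Finset.Subset.refl _, by omega, by rw [← h]; simp⟩
  | succ d ih =>
    intro t h
    obtain ⟨R, hRK, hR, hs⟩ := ih (t + 1) (by omega)
    have hne : R.Nonempty := by rw [← Finset.card_pos]; omega
    obtain ⟨r, hr, hmax⟩ := Finset.exists_max_image R f hne
    refine ⟨R.erase r, (Finset.erase_subset _ _).trans hRK, by
      rw [Finset.card_erase_of_mem hr]; omega, ?_⟩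
    have h1 := Finset.add_sum_erase R f hr
    have h2 : ∑ x ∈ R.erase r, f x ≤ t * f r := by
      have := Finset.sum_le_card_nsmul (R.erase r) f (f r)
        (fun x hx => hmax x (Finset.mem_of_mem_erase hx))
      rw [Finset.card_erase_of_mem hr, hR] at this
      simpa using this
    set a := ∑ x ∈ R.erase r, f x
    set b := ∑ x ∈ K, f x
    rw [← h1] at hs
    have h3 : (t + 1) * (K.card * a) ≤ (t + 1) * (t * b) := by
      have : K.card * a ≤ K.card * (t * f r) := Nat.mul_le_mul_left _ h2
      nlinarith [Nat.mul_le_mul_left t hs]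
    exact Nat.le_of_mul_le_mul_left h3 (by omega)

lemma rank_image {V : Type*} [DecidableEq V] (T : Finset V) (κ : V → ℕ)
    (hκ : Function.Injective κ) :
    T.image (fun x => (T.filter (fun z => κ x < κ z)).card) = Finset.range T.card := by
  apply Finset.eq_of_subset_of_card_le
  · intro i hi
    obtain ⟨x, hx, rfl⟩ := Finset.mem_image.1 hi
    rw [Finset.mem_range]
    apply Finset.card_lt_card
    refine ⟨Finset.filter_subset _ _, fun h => ?_⟩
    have := h hx
    simp at this
  · rw [Finset.card_image_of_injOn, Finset.card_range]
    have key : ∀ x ∈ T, ∀ y ∈ T, κ x < κ y →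
        (T.filter (fun z => κ y < κ z)).card < (T.filter (fun z => κ x < κ z)).card := by
      intro x hx y hy hxy
      apply Finset.card_lt_card
      refine ⟨fun z hz => ?_, fun h => ?_⟩
      · simp only [Finset.mem_filter] at hz ⊢
        exact ⟨hz.1, hxy.trans hz.2⟩
      · have := h (Finset.mem_filter.2 ⟨hy, hxy⟩)
        simp at this
    intro x hx y hy hxy
    by_contra hne
    rcases lt_or_gt_of_ne (fun h => hne (hκ h)) with h | h
    · have := key x hx y hy h
      simp only at hxy; omega
    · have := key y hy x hx h
      simp only at hxy; omega

/-- depth function on a set in which every trace is a chain -/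
lemma depth_exists {V : Type*} [Fintype V] [DecidableEq V] (F : Finset (Finset V)) (S : Finset V)
    (hS : ∀ e ∈ F, ∀ x ∈ S, ∀ y ∈ S, x ∈ e → y ∈ e →
      (∀ e' ∈ F, x ∈ e' → y ∈ e') ∨ (∀ e' ∈ F, y ∈ e' → x ∈ e')) :
    ∃ d : V → ℕ, ∀ e ∈ F, (e ∩ S).image d = Finset.range (e ∩ S).card := by
  classical
  let u : V → ℕ := fun x => (F.filter (fun e => x ∈ e)).card
  let idx := Fintype.equivFin V
  let κ : V → ℕ := fun x => (idx x : ℕ) + Fintype.card V * u x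
  have hκ : Function.Injective κ := by
    intro x y h
    have h1 : (κ x) % Fintype.card V = (κ y) % Fintype.card V := by rw [h]
    simp only [κ, Nat.add_mul_mod_self_left, Nat.mod_eq_of_lt (idx x).2,
      Nat.mod_eq_of_lt (idx y).2] at h1
    exact idx.injective (Fin.ext h1)
  have hκu : ∀ x y, κ x < κ y → u x ≤ u y := by
    intro x y h
    by_contra hlt
    push Not at hlt
    have : Fintype.card V * (u y + 1) ≤ Fintype.card V * u x := Nat.mul_le_mul_left _ hlt
    have h2 := (idx y).2
    simp only [κ] at h
    rw [Nat.mul_add] at this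
    omega
  refine ⟨fun x => (S.filter (fun z => κ x < κ z ∧ ∀ e' ∈ F, x ∈ e' → z ∈ e')).card, ?_⟩
  intro e he
  rw [← rank_image (e ∩ S) κ hκ]
  apply Finset.image_congr
  intro x hx
  simp only [Finset.coe_inter, Set.mem_inter_iff, Finset.mem_coe] at hx
  simp only
  congr 1
  ext z
  simp only [Finset.mem_filter, Finset.mem_inter]
  constructor
  · rintro ⟨h1, h2, h3⟩
    exact ⟨⟨h3 e he hx.1, h1⟩, h2⟩
  · rintro ⟨⟨h1, h2⟩, h3⟩
    refine ⟨h2, h3, ?_⟩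
    rcases hS e he x hx.2 z h2 hx.1 h1 with h | h
    · exact h
    · have hsub : F.filter (fun e => z ∈ e) ⊆ F.filter (fun e => x ∈ e) := by
        intro e' he'
        simp only [Finset.mem_filter] at he' ⊢
        exact ⟨he'.1, h e' he'.1 he'.2⟩
      have heq := Finset.eq_of_subset_of_card_le hsub (hκu x z h3)
      intro e' he' hxe
      have : e' ∈ F.filter (fun e => x ∈ e) := Finset.mem_filter.2 ⟨he', hxe⟩
      rw [← heq] at this
      exact (Finset.mem_filter.1 this).2

/-- the base case: trace of `e0` on `G` is a chain -/
lemma chain_case {V : Type*} [Fintype V] [DecidableEq V] (F : Finset (Finset V)) (A B : Finset V)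
    (hAB : Disjoint A B)
    (hA : ∀ e ∈ F, ∀ x ∈ A, ∀ y ∈ A, x ∈ e → y ∈ e →
      (∀ e' ∈ F, x ∈ e' → y ∈ e') ∨ (∀ e' ∈ F, y ∈ e' → x ∈ e'))
    (hB : ∀ e ∈ F, ∀ x ∈ B, ∀ y ∈ B, x ∈ e → y ∈ e →
      (∀ e' ∈ F, x ∈ e' → y ∈ e') ∨ (∀ e' ∈ F, y ∈ e' → x ∈ e'))
    (t k : ℕ) (htk : t ≤ k) :
    ∃ W ⊆ A ∪ B, k * W.card ≤ t * (A ∪ B).card ∧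
      ∀ e ∈ F, ∀ j, k ≤ (e ∩ (A ∪ B)).card + j → t ≤ (e ∩ W).card + j := by
  classical
  obtain ⟨dA, hdA⟩ := depth_exists F A hA
  obtain ⟨dB, hdB⟩ := depth_exists F B hB
  rcases Nat.eq_zero_or_pos k with hk | hk
  · exact ⟨∅, by simp, by simp, fun e _ j _ => by omega⟩
  let φ : V → ℤ := fun x => if x ∈ A then (dA x : ℤ) else -1 - (dB x : ℤ)
  let χ : V → ℤ := fun x => φ x % (k : ℤ)
  let G := A ∪ B
  let K := Finset.Ico (0 : ℤ) k
  have hKc : K.card = k := by simp [K]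
  obtain ⟨R, hRK, hR, hs⟩ := light_classes K (fun r => (G.filter (fun v => χ v = r)).card) (k - t) t
    (by rw [hKc]; omega)
  have hmaps : ∀ v, χ v ∈ K := by
    intro v
    simp only [K, χ, Finset.mem_Ico]
    exact ⟨Int.emod_nonneg _ (by omega), Int.emod_lt_of_pos _ (by omega)⟩
  refine ⟨G.filter (fun v => χ v ∈ R), Finset.filter_subset _ _, ?_, ?_⟩
  · have h1 : G.card = ∑ r ∈ K, (G.filter (fun v => χ v = r)).card :=
      Finset.card_eq_sum_card_fiberwise (fun v _ => hmaps v)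
    have h2 : (G.filter (fun v => χ v ∈ R)).card
        = ∑ r ∈ R, (G.filter (fun v => χ v = r)).card := by
      rw [Finset.card_eq_sum_card_fiberwise (f := χ) (t := R)]
      · apply Finset.sum_congr rfl
        intro r hr
        congr 1
        ext v
        simp only [Finset.mem_filter]
        constructor
        · rintro ⟨⟨a, b⟩, c⟩; exact ⟨a, c⟩
        · rintro ⟨a, c⟩; exact ⟨⟨a, c ▸ hr⟩, c⟩
      · intro v hv
        simpa using (Finset.mem_filter.1 hv).2
    rw [hKc] at hs
    rw [h2]
    change _ ≤ t * G.card
    rw [h1]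
    exact hs
  · intro e he j hj
    have hcard : (e ∩ (A ∪ B)).card = (e ∩ A).card + (e ∩ B).card := by
      rw [Finset.inter_union_distrib_left, Finset.card_union_of_disjoint]
      exact hAB.mono Finset.inter_subset_right Finset.inter_subset_right
    set a := (e ∩ A).card with ha
    set b := (e ∩ B).card with hb
    -- every integer in [-b, a) is attained
    have hatt : ∀ i : ℤ, -(b : ℤ) ≤ i → i < a → ∃ v ∈ e ∩ G, φ v = i := by
      intro i h1 h2
      rcases le_or_gt 0 i with h | h
      · have : i.toNat ∈ (e ∩ A).image dA := by
          rw [hdA e he, Finset.mem_range]; omega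
        obtain ⟨v, hv, hvi⟩ := Finset.mem_image.1 this
        rw [Finset.mem_inter] at hv
        refine ⟨v, by simp [G, hv.1, hv.2], ?_⟩
        simp only [φ, if_pos hv.2]; omega
      · have : (-1 - i).toNat ∈ (e ∩ B).image dB := by
          rw [hdB e he, Finset.mem_range]; omega
        obtain ⟨v, hv, hvi⟩ := Finset.mem_image.1 this
        rw [Finset.mem_inter] at hv
        refine ⟨v, by simp [G, hv.1, hv.2], ?_⟩
        have hn : v ∉ A := fun hvA => Finset.disjoint_left.1 hAB hvA hv.2
        simp only [φ, if_neg hn]; omega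
    have hsub : R ⊆ (e ∩ G.filter (fun v => χ v ∈ R)).image χ ∪
        (Finset.Ico (a : ℤ) (-(b : ℤ) + k)).image (fun i => i % (k : ℤ)) := by
      intro r hr
      have hrK := hRK hr
      have himg := Int.image_Ico_emod (-(b : ℤ)) (k : ℤ) (by omega)
      have hrK' : r ∈ Finset.Ico (0 : ℤ) k := hrK
      rw [← himg] at hrK'
      obtain ⟨i, hi, hir⟩ := Finset.mem_image.1 hrK'
      rw [Finset.mem_Ico] at hi
      rw [Finset.mem_union]
      rcases lt_or_ge i (a : ℤ) with h | h
      · left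
        obtain ⟨v, hv, hvi⟩ := hatt i hi.1 h
        have hχ : χ v = r := by simp only [χ, hvi]; exact hir
        rw [Finset.mem_inter] at hv
        exact Finset.mem_image.2 ⟨v, Finset.mem_inter.2
          ⟨hv.1, Finset.mem_filter.2 ⟨hv.2, hχ ▸ hr⟩⟩, hχ⟩
      · right
        exact Finset.mem_image.2 ⟨i, Finset.mem_Ico.2 ⟨h, hi.2⟩, hir⟩
    have h1 := Finset.card_le_card hsub
    have h2 := Finset.card_union_le ((e ∩ G.filter (fun v => χ v ∈ R)).image χ)
        ((Finset.Ico (a : ℤ) (-(b : ℤ) + k)).image (fun i => i % (k : ℤ)))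
    have h3 : ((e ∩ G.filter (fun v => χ v ∈ R)).image χ).card ≤ _ := Finset.card_image_le
    have h4 : ((Finset.Ico (a : ℤ) (-(b : ℤ) + k)).image (fun i => i % (k : ℤ))).card ≤ _ :=
      Finset.card_image_le
    rw [Int.card_Ico] at h4
    omega

lemma main_induction {V : Type*} [Fintype V] [DecidableEq V] (F : Finset (Finset V))
    (e0 : Finset V) (he0 : e0 ∈ F)
    (hF : ∀ x y, x ≠ y → (∃ e ∈ F, x ∈ e ∧ y ∈ e) → (∃ e ∈ F, x ∉ e ∧ y ∉ e) →
      (∀ e ∈ F, x ∈ e → y ∈ e) ∨ (∀ e ∈ F, y ∈ e → x ∈ e)) (t : ℕ) :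
    ∀ (k N : ℕ) (G : Finset V), t ≤ k → 2 * k ≤ N → G.card ≤ N →
    ∃ W ⊆ G, k * W.card ≤ t * N ∧
      ∀ e ∈ F, ∀ j, k ≤ (e ∩ G).card + j → t ≤ (e ∩ W).card + j := by
  induction t with
  | zero => exact fun k N G _ _ _ => ⟨∅, by simp, by simp, fun e _ j _ => by omega⟩
  | succ t ih =>
    intro k N G htk hkN hGN
    by_cases hp : ∃ x ∈ e0 ∩ G, ∃ y ∈ e0 ∩ G, x ≠ y ∧ ∀ e ∈ F, x ∈ e ∨ y ∈ e
    · obtain ⟨x, hx, y, hy, hxy, hcov⟩ := hp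
      rw [Finset.mem_inter] at hx hy
      have hpair : ({x, y} : Finset V) ⊆ G := by
        intro z hz
        simp only [Finset.mem_insert, Finset.mem_singleton] at hz
        rcases hz with rfl | rfl
        · exact hx.2
        · exact hy.2
      have hpc : ({x, y} : Finset V).card = 2 := Finset.card_pair hxy
      have hpe : ∀ e ∈ F, 1 ≤ (e ∩ {x, y}).card := by
        intro e he
        rw [Nat.succ_le_iff, Finset.card_pos]
        rcases hcov e he with h | h
        · exact ⟨x, by simp [h]⟩
        · exact ⟨y, by simp [h]⟩
      rcases Nat.eq_zero_or_pos t with ht | ht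
      · subst ht
        refine ⟨{x, y}, hpair, by rw [hpc]; omega, fun e he j _ => ?_⟩
        have := hpe e he
        omega
      obtain ⟨k, rfl⟩ : ∃ k', k = k' + 1 := ⟨k - 1, by omega⟩
      obtain ⟨N, rfl⟩ : ∃ N', N = N' + 2 := ⟨N - 2, by omega⟩
      have hG' : (G \ {x, y}).card + 2 = G.card := by
        rw [← hpc]; exact Finset.card_sdiff_add_card_eq_card hpair
      obtain ⟨W, hWG, hWc, hW⟩ := ih k N (G \ {x, y}) (by omega) (by omega) (by omega)
      have hdisj : Disjoint W {x, y} := Finset.disjoint_of_subset_left hWG Finset.sdiff_disjoint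
      refine ⟨W ∪ {x, y}, Finset.union_subset (hWG.trans Finset.sdiff_subset) hpair, ?_, ?_⟩
      · rw [Finset.card_union_of_disjoint hdisj, hpc]
        obtain ⟨p, rfl⟩ : ∃ p, k = t + p := ⟨k - t, by omega⟩
        obtain ⟨q, rfl⟩ : ∃ q, N = 2 * (t + p) + q := ⟨N - 2 * (t + p), by omega⟩
        have : (t + p) * ((t + p + 1) * (W.card + 2)) ≤
            (t + p) * ((t + 1) * (2 * (t + p) + q + 2)) := by
          have h1 := Nat.mul_le_mul_left (t + p + 1) hWc
          nlinarith [Nat.zero_le (p * q)]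
        exact Nat.le_of_mul_le_mul_left this (by omega)
      · intro e he j hj
        have h1 : (e ∩ G).card = (e ∩ (G \ {x, y})).card + (e ∩ {x, y}).card := by
          rw [← Finset.card_union_of_disjoint, ← Finset.inter_union_distrib_left,
            Finset.sdiff_union_of_subset hpair]
          exact Finset.sdiff_disjoint.mono Finset.inter_subset_right Finset.inter_subset_right
        have h2 : (e ∩ (W ∪ {x, y})).card = (e ∩ W).card + (e ∩ {x, y}).card := by
          rw [Finset.inter_union_distrib_left, Finset.card_union_of_disjoint]
          exact hdisj.mono Finset.inter_subset_right Finset.inter_subset_right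
        have h3 := hpe e he
        have h4 := hW e he (j + (e ∩ {x, y}).card - 1) (by omega)
        omega
    · push Not at hp
      have hG : (e0 ∩ G) ∪ (G \ e0) = G := by
        ext z; simp only [Finset.mem_union, Finset.mem_inter, Finset.mem_sdiff]; tauto
      have := chain_case F (e0 ∩ G) (G \ e0)
        (Finset.disjoint_left.2 fun z h1 h2 =>
          (Finset.mem_sdiff.1 h2).2 (Finset.mem_inter.1 h1).1) ?_ ?_ (t + 1) k htk
      · rw [hG] at this
        obtain ⟨W, h1, h2, h3⟩ := this
        exact ⟨W, h1, h2.trans (Nat.mul_le_mul_left _ hGN), h3⟩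
      · intro e he x hx y hy hxe hye
        by_cases hxy : x = y
        · subst hxy; exact Or.inl fun _ _ h => h
        · exact hF x y hxy ⟨e, he, hxe, hye⟩ (hp x hx y hy hxy)
      · intro e he x hx y hy hxe hye
        by_cases hxy : x = y
        · subst hxy; exact Or.inl fun _ _ h => h
        · exact hF x y hxy ⟨e, he, hxe, hye⟩
            ⟨e0, he0, (Finset.mem_sdiff.1 hx).2, (Finset.mem_sdiff.1 hy).2⟩

lemma pair_of_vc {V : Type*} [DecidableEq V] (E F : Finset (Finset V)) (hFE : F ⊆ E)
    (hvc : ∀ A : Finset V, Shatters E A → A.card ≤ 1) (x y : V) (hxy : x ≠ y)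
    (h11 : ∃ e ∈ F, x ∈ e ∧ y ∈ e) (h00 : ∃ e ∈ F, x ∉ e ∧ y ∉ e) :
      (∀ e ∈ F, x ∈ e → y ∈ e) ∨ (∀ e ∈ F, y ∈ e → x ∈ e) := by
  by_contra hcon
  push Not at hcon
  obtain ⟨⟨e1, he1, hx1, hy1⟩, ⟨e2, he2, hy2, hx2⟩⟩ := hcon
  obtain ⟨e3, he3, hx3, hy3⟩ := h11
  obtain ⟨e4, he4, hx4, hy4⟩ := h00
  have : Shatters E {x, y} := by
    intro B hB
    have hB' : ∀ z ∈ B, z = x ∨ z = y := fun z hz => by simpa using hB hz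
    have key : ∀ e : Finset V, (x ∈ e ↔ x ∈ B) → (y ∈ e ↔ y ∈ B) → {x, y} ∩ e = B := by
      intro e h1 h2
      ext z
      simp only [Finset.mem_inter, Finset.mem_insert, Finset.mem_singleton]
      constructor
      · rintro ⟨rfl | rfl, h⟩
        · exact h1.1 h
        · exact h2.1 h
      · intro h
        refine ⟨hB' z h, ?_⟩
        rcases hB' z h with rfl | rfl
        · exact h1.2 h
        · exact h2.2 h
    by_cases hx : x ∈ B <;> by_cases hy : y ∈ B
    · exact ⟨e3, hFE he3, key _ (by tauto) (by tauto)⟩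
    · exact ⟨e1, hFE he1, key _ (by tauto) (by tauto)⟩
    · exact ⟨e2, hFE he2, key _ (by tauto) (by tauto)⟩
    · exact ⟨e4, hFE he4, key _ (by tauto) (by tauto)⟩
  have := hvc _ this
  rw [Finset.card_pair hxy] at this
  omega

lemma trace_card {V : Type*} [DecidableEq V] (E F : Finset (Finset V)) (hFE : F ⊆ E)
    (hvc : ∀ A : Finset V, Shatters E A → A.card ≤ 1) (W : Finset V) :
    (F.image (fun e => e ∩ W)).card ≤ W.card + 1 := by
  classical
  refine (Finset.card_le_card_shatterer _).trans ?_
  have hsub : (F.image (fun e => e ∩ W)).shatterer ⊆ insert ∅ (W.image (fun v => {v})) := by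
    intro s hs
    rw [Finset.mem_shatterer] at hs
    have hsW : s ⊆ W := by
      obtain ⟨u, hu, hsu⟩ := hs (Finset.Subset.refl s)
      obtain ⟨e, he, rfl⟩ := Finset.mem_image.1 hu
      rw [← hsu]
      exact Finset.inter_subset_right.trans Finset.inter_subset_right
    have hsE : Shatters E s := by
      intro B hB
      obtain ⟨u, hu, hsu⟩ := hs hB
      obtain ⟨e, he, rfl⟩ := Finset.mem_image.1 hu
      refine ⟨e, hFE he, ?_⟩
      rw [← hsu]
      ext z
      simp only [Finset.mem_inter]
      constructor
      · rintro ⟨h1, h2⟩; exact ⟨h1, h2, hsW h1⟩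
      · rintro ⟨h1, h2, _⟩; exact ⟨h1, h2⟩
    have hc := hvc s hsE
    rw [Finset.mem_insert]
    rcases Nat.lt_or_ge s.card 1 with h | h
    · left; exact Finset.card_eq_zero.1 (by omega)
    · right
      obtain ⟨v, rfl⟩ := Finset.card_eq_one.1 (le_antisymm hc h)
      exact Finset.mem_image.2 ⟨v, hsW (by simp), rfl⟩
  refine (Finset.card_le_card hsub).trans ((Finset.card_insert_le _ _).trans ?_)
  have := Finset.card_image_le (s := W) (f := fun v => ({v} : Finset V))
  omega

theorem eps_t_net_of_vc_dim_one {V : Type*} [Fintype V] [DecidableEq V]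
    (E : Finset (Finset V)) (t : ℕ) (ht : 1 ≤ t) (ε : ℝ) (hε0 : 0 < ε) (hε1 : ε ≤ 1 / 2)
    (hn : t * ⌈1 / ε⌉₊ ≤ Fintype.card V) (hvc : IsVCDim E 1) :
    ∃ S : Finset (Finset V), IsEpsTNet E ε t S ∧ S.card ≤ t * ⌈1 / ε⌉₊ + 1 := by
  classical
  set m := ⌈1 / ε⌉₊ with hm
  have hm1 : 1 / ε ≤ (m : ℝ) := Nat.le_ceil _
  have hm1' : 1 ≤ (m : ℝ) * ε := by rwa [div_le_iff₀ hε0] at hm1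
  have hm2 : 2 ≤ m := by
    have : (2 : ℝ) ≤ m := by nlinarith
    exact_mod_cast this
  let n := Fintype.card V
  let k := ⌈ε * (n : ℝ)⌉₊
  have hk : ε * (n : ℝ) ≤ k := Nat.le_ceil _
  have hn' : (t : ℝ) * m ≤ n := by exact_mod_cast hn
  have htk : t ≤ k := by
    have ht0 : (0 : ℝ) ≤ t := Nat.cast_nonneg t
    have : (t : ℝ) ≤ k := by nlinarith
    exact_mod_cast this
  have hnk : n ≤ k * m := by
    have hn0 : (0 : ℝ) ≤ n := Nat.cast_nonneg n
    have hm0 : (0 : ℝ) ≤ m := Nat.cast_nonneg m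
    have : (n : ℝ) ≤ k * m := by nlinarith
    exact_mod_cast this
  let F := E.filter (fun e => ε * (n : ℝ) ≤ (e.card : ℝ))
  have hFE : F ⊆ E := Finset.filter_subset _ _
  rcases F.eq_empty_or_nonempty with hF | ⟨e0, he0⟩
  · refine ⟨∅, ⟨by simp, fun e he h => ?_⟩, by simp⟩
    have : e ∈ F := Finset.mem_filter.2 ⟨he, h⟩
    rw [hF] at this
    simp at this
  obtain ⟨W, -, hWc, hW⟩ := main_induction F e0 he0 (pair_of_vc E F hFE hvc.2) t k (k * m)
    Finset.univ htk (by nlinarith) hnk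
  have hWm : W.card ≤ t * m := by
    have : k * W.card ≤ k * (t * m) := by linarith [mul_left_comm t k m]
    exact Nat.le_of_mul_le_mul_left this (by omega)
  have hWt : ∀ e ∈ F, t ≤ (e ∩ W).card := by
    intro e he
    have h1 : k ≤ e.card := Nat.ceil_le.2 (Finset.mem_filter.1 he).2
    simpa using hW e he 0 (by simpa using h1)
  let T := F.image (fun e => e ∩ W)
  have hT : ∀ s ∈ T, ∃ r ⊆ s, r.card = t := by
    intro s hs
    obtain ⟨e, he, rfl⟩ := Finset.mem_image.1 hs
    exact Finset.exists_subset_card_eq (hWt e he)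
  choose! g hg1 hg2 using hT
  refine ⟨T.image g, ⟨?_, ?_⟩, ?_⟩
  · intro s hs
    obtain ⟨r, hr, rfl⟩ := Finset.mem_image.1 hs
    exact hg2 r hr
  · intro e he h
    have heT : e ∩ W ∈ T := Finset.mem_image.2 ⟨e, Finset.mem_filter.2 ⟨he, h⟩, rfl⟩
    exact ⟨g (e ∩ W), Finset.mem_image_of_mem g heT, (hg1 _ heT).trans Finset.inter_subset_left⟩
  · have h1 : (T.image g).card ≤ T.card := Finset.card_image_le
    have h2 : T.card ≤ W.card + 1 := trace_card E F hFE hvc.2 W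
    omega
end

section
/- For every integer t ≥ 1 there is a constant c_t > 0 such that the following holds: every finite hypergraph H on n vertices with VC-dimension d ≥ 1 admits, for every ε ∈ (0,1) with n ≥ 2t/ε, an ε-t-net of size at most c_t·(d/ε^t)·log₂(2/ε). -/
open Finset in
lemma net_psi_sum {W : Type*} [DecidableEq W] (h : Finset W) (p : W × W) :
    (if p.1 ∈ h then (0:ℝ) else if p.2 ∈ h then 2 else 1) +
      (if p.2 ∈ h then (0:ℝ) else if p.1 ∈ h then 2 else 1) ≤ 2 := by
  split_ifs <;> norm_num

def netPsi {W : Type*} [DecidableEq W] (h : Finset W) (p : W × W) : ℝ :=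
  if p.1 ∈ h then (0:ℝ) else if p.2 ∈ h then 2 else 1

lemma netPsi_nonneg {W : Type*} [DecidableEq W] (h : Finset W) (p : W × W) :
    0 ≤ netPsi h p := by
  unfold netPsi; split_ifs <;> norm_num

def netSwap {W : Type*} (b : Bool) (p : W × W) : W × W := if b then p.swap else p

lemma netSwap_invol {W : Type*} (b : Bool) (p : W × W) : netSwap b (netSwap b p) = p := by
  cases b <;> simp [netSwap]

def netSupp {W : Type*} [DecidableEq W] {m : ℕ} (z : Fin m → W × W) : Finset W :=
  Finset.univ.biUnion fun i => {(z i).1, (z i).2}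

lemma netSupp_swap {W : Type*} [DecidableEq W] {m : ℕ} (z : Fin m → W × W) (s : Fin m → Bool) :
    netSupp (fun i => netSwap (s i) (z i)) = netSupp z := by
  unfold netSupp
  congr 1
  funext i
  cases hb : s i
  · simp [netSwap, hb]
  · simp [netSwap, hb, Finset.pair_comm]

lemma netSupp_card {W : Type*} [DecidableEq W] {m : ℕ} (z : Fin m → W × W) :
    (netSupp z).card ≤ 2 * m := by
  refine (Finset.card_biUnion_le_card_mul _ _ 2 (fun i _ => Finset.card_le_two)).trans ?_
  simp [mul_comm]

/-- the sum over all pairs of samples is bounded via symmetrization -/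
lemma net_upper {W : Type*} [Fintype W] [DecidableEq W] (F : Finset (Finset W)) (m : ℕ) (g : ℝ)
    (hg : ∀ z : Fin m → W × W, ((F.image (· ∩ netSupp z)).card : ℝ) ≤ g) :
    ∑ z : Fin m → W × W, ∑ h ∈ F.image (· ∩ netSupp z), ∏ i, netPsi h (z i)
      ≤ (Fintype.card W : ℝ) ^ (2 * m) * g := by
  set A := ∑ z : Fin m → W × W, ∑ h ∈ F.image (· ∩ netSupp z), ∏ i, netPsi h (z i) with hA
  have h1 : ∀ s : Fin m → Bool,
      ∑ z : Fin m → W × W, ∑ h ∈ F.image (· ∩ netSupp z),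
        ∏ i, netPsi h (netSwap (s i) (z i)) = A := by
    intro s
    let φ : (Fin m → W × W) ≃ (Fin m → W × W) :=
      { toFun := fun z i => netSwap (s i) (z i)
        invFun := fun z i => netSwap (s i) (z i)
        left_inv := fun z => by funext i; exact netSwap_invol _ _
        right_inv := fun z => by funext i; exact netSwap_invol _ _ }
    rw [hA, ← Equiv.sum_comp φ (fun z => ∑ h ∈ F.image (· ∩ netSupp z), ∏ i, netPsi h (z i))]
    refine Finset.sum_congr rfl fun z _ => ?_
    have : netSupp (φ z) = netSupp z := netSupp_swap z s
    rw [this]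
    rfl
  have h2 : (2:ℝ) ^ m * A = ∑ z : Fin m → W × W, ∑ h ∈ F.image (· ∩ netSupp z),
      ∑ s : Fin m → Bool, ∏ i, netPsi h (netSwap (s i) (z i)) := by
    have : ∑ s : Fin m → Bool, ∑ z : Fin m → W × W, ∑ h ∈ F.image (· ∩ netSupp z),
        ∏ i, netPsi h (netSwap (s i) (z i)) = (2:ℝ) ^ m * A := by
      rw [Finset.sum_congr rfl (fun s _ => h1 s)]
      simp
    rw [← this, Finset.sum_comm]
    refine Finset.sum_congr rfl fun z _ => ?_
    rw [Finset.sum_comm]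
  have h3 : ∀ (h : Finset W) (z : Fin m → W × W),
      ∑ s : Fin m → Bool, ∏ i, netPsi h (netSwap (s i) (z i)) ≤ (2:ℝ) ^ m := by
    intro h z
    rw [← Fintype.prod_sum (fun i b => netPsi h (netSwap b (z i)))]
    calc ∏ i, ∑ b : Bool, netPsi h (netSwap b (z i)) ≤ ∏ i : Fin m, (2:ℝ) := by
          refine Finset.prod_le_prod (fun i _ => Finset.sum_nonneg fun b _ => netPsi_nonneg _ _) ?_
          intro i _
          have := net_psi_sum h (z i)
          simp only [Fintype.sum_bool, netSwap, netPsi]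
          simp only [if_true, Bool.false_eq_true, if_false, Prod.fst_swap, Prod.snd_swap]
          linarith
      _ = 2 ^ m := by simp
  have h4 : (2:ℝ) ^ m * A ≤ 2 ^ m * ((Fintype.card W : ℝ) ^ (2 * m) * g) := by
    rw [h2]
    calc _ ≤ ∑ z : Fin m → W × W, (2:ℝ) ^ m * g := by
          refine Finset.sum_le_sum fun z _ => ?_
          calc _ ≤ ∑ h ∈ F.image (· ∩ netSupp z), (2:ℝ) ^ m :=
                Finset.sum_le_sum fun h _ => h3 h z
            _ = (2:ℝ) ^ m * ((F.image (· ∩ netSupp z)).card : ℝ) := by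
                rw [Finset.sum_const, nsmul_eq_mul, mul_comm]
            _ ≤ _ := by gcongr; exact hg z
      _ = _ := by
          simp only [Finset.sum_const, nsmul_eq_mul, Finset.card_univ]
          simp only [Fintype.card_fun, Fintype.card_prod, Fintype.card_fin]
          push_cast
          rw [pow_mul, sq]; ring
  exact le_of_mul_le_mul_left h4 (by positivity)

/-- The epsilon-net theorem, in terms of the growth function. -/
lemma net_exists {W : Type*} [Fintype W] [Nonempty W] [DecidableEq W] (F : Finset (Finset W))
    (m : ℕ) (g δ : ℝ) (hδ : 0 ≤ δ)
    (hF : ∀ f ∈ F, δ * (Fintype.card W : ℝ) ≤ (f.card : ℝ))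
    (hg : ∀ z : Fin m → W × W, ((F.image (· ∩ netSupp z)).card : ℝ) ≤ g)
    (hm : g < (1 + δ) ^ m) :
    ∃ x : Fin m → W, ∀ f ∈ F, ∃ i, x i ∈ f := by
  by_contra! hcon
  choose f hfF hf using hcon
  have hup := net_upper F m g hg
  have hW : (0:ℝ) < Fintype.card W := by exact_mod_cast Fintype.card_pos
  have hlow : (Fintype.card W : ℝ) ^ (2 * m) * (1 + δ) ^ m ≤
      ∑ z : Fin m → W × W, ∑ h ∈ F.image (· ∩ netSupp z), ∏ i, netPsi h (z i) := by
    let ψ : (Fin m → W) × (Fin m → W) ≃ (Fin m → W × W) :=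
      (Equiv.arrowProdEquivProdArrow (Fin m) (fun _ => W) (fun _ => W)).symm
    rw [← Equiv.sum_comp ψ, Fintype.sum_prod_type]
    have key : ∀ x : Fin m → W, ((Fintype.card W : ℝ) * (1 + δ)) ^ m ≤
        ∑ y : Fin m → W, ∑ h ∈ F.image (· ∩ netSupp (ψ (x, y))),
          ∏ i, netPsi h (ψ (x, y) i) := by
      intro x
      have e1 : ∀ y : Fin m → W, ∏ i, (1 + if y i ∈ f x then (1:ℝ) else 0) ≤
          ∑ h ∈ F.image (· ∩ netSupp (ψ (x, y))), ∏ i, netPsi h (ψ (x, y) i) := by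
        intro y
        have hmem : f x ∩ netSupp (ψ (x, y)) ∈ F.image (· ∩ netSupp (ψ (x, y))) :=
          Finset.mem_image_of_mem _ (hfF x)
        refine le_trans (le_of_eq ?_) (Finset.single_le_sum
          (f := fun h => ∏ i, netPsi h (ψ (x, y) i))
          (fun h _ => Finset.prod_nonneg fun i _ => netPsi_nonneg _ _) hmem)
        refine Finset.prod_congr rfl fun i _ => ?_
        have hψ : ψ (x, y) i = (x i, y i) := rfl
        have hy : y i ∈ netSupp (ψ (x, y)) := by
          simp only [netSupp, Finset.mem_biUnion, Finset.mem_univ, true_and]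
          exact ⟨i, by simp [hψ]⟩
        rw [hψ]
        simp only [netPsi, Finset.mem_inter, hf x i, hy, false_and, and_true, if_false]
        split_ifs <;> norm_num
      refine le_trans ?_ (Finset.sum_le_sum fun y _ => e1 y)
      rw [← Fintype.prod_sum (fun (_ : Fin m) (b : W) => (1 + if b ∈ f x then (1:ℝ) else 0))]
      rw [Finset.prod_const, Finset.card_univ, Fintype.card_fin]
      refine pow_le_pow_left₀ (by positivity) ?_ m
      rw [Finset.sum_add_distrib]
      have := hF _ (hfF x)
      simp
      linarith
    refine le_trans (le_of_eq ?_) (Finset.sum_le_sum fun x _ => key x)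
    simp only [Finset.sum_const, nsmul_eq_mul, Finset.card_univ]
    simp only [Fintype.card_fun, Fintype.card_fin]
    push_cast
    rw [mul_pow]; ring
  have := le_of_mul_le_mul_left (hlow.trans hup) (by positivity)
  linarith

/-- Sauer-Shelah with a weight `x`. -/
lemma net_sauer {V : Type*} [DecidableEq V] (E : Finset (Finset V)) (d : ℕ)
    (hd : ∀ A : Finset V, Shatters E A → A.card ≤ d) (U : Finset V) (x : ℝ) (hx : 0 < x)
    (hx1 : x ≤ 1) :
    (((E.image (· ∩ U)).card : ℕ) : ℝ) ≤ (1 + x) ^ U.card / x ^ d := by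
  have h1 : (E.image (· ∩ U)).shatterer ⊆ U.powerset.filter (fun A => A.card ≤ d) := by
    intro A hA
    rw [Finset.mem_shatterer] at hA
    have hAU : A ⊆ U := by
      obtain ⟨u, hu, hu2⟩ := hA (Finset.Subset.refl A)
      obtain ⟨e, -, rfl⟩ := Finset.mem_image.1 hu
      intro a ha
      rw [← hu2] at ha
      simp at ha
      exact ha.2.2
    rw [Finset.mem_filter, Finset.mem_powerset]
    refine ⟨hAU, hd A ?_⟩
    intro B hB
    obtain ⟨u, hu, hu2⟩ := hA hB
    obtain ⟨e, he, rfl⟩ := Finset.mem_image.1 hu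
    refine ⟨e, he, ?_⟩
    rw [← hu2]
    ext a
    simp only [Finset.mem_inter]
    constructor
    · rintro ⟨h, h'⟩; exact ⟨h, h', hAU h⟩
    · rintro ⟨h, h', _⟩; exact ⟨h, h'⟩
  have h2 : ((E.image (· ∩ U)).card : ℝ) ≤ ((U.powerset.filter (fun A => A.card ≤ d)).card : ℝ) := by
    exact_mod_cast (Finset.card_le_card_shatterer _).trans (Finset.card_le_card h1)
  refine h2.trans ?_
  rw [le_div_iff₀ (by positivity)]
  have h3 : (1 + x) ^ U.card = ∑ A ∈ U.powerset, x ^ A.card := by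
    have := Finset.prod_one_add (f := fun _ : V => x) U
    simpa using this
  rw [h3]
  calc _ = ∑ A ∈ U.powerset.filter (fun A => A.card ≤ d), x ^ d := by simp
    _ ≤ ∑ A ∈ U.powerset.filter (fun A => A.card ≤ d), x ^ A.card := by
        refine Finset.sum_le_sum fun A hA => ?_
        exact pow_le_pow_of_le_one hx.le hx1 (Finset.mem_filter.1 hA).2
    _ ≤ _ := Finset.sum_le_sum_of_subset_of_nonneg (Finset.filter_subset _ _)
        (fun A _ _ => by positivity)

lemma net_choose (t n k : ℕ) (ε : ℝ) (hε : 0 < ε) (hk : ε * n ≤ k) (hn : 2 * (t:ℝ) ≤ ε * n) :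
    (ε / 2) ^ t * (n.choose t : ℝ) ≤ (k.choose t : ℝ) := by
  have hf : (0:ℝ) < (t.factorial : ℝ) := by exact_mod_cast t.factorial_pos
  have h1 : ((k + 1 - t : ℕ) : ℝ) ^ t ≤ (t.factorial : ℝ) * (k.choose t : ℝ) := by
    have := Nat.pow_sub_le_descFactorial k t
    rw [Nat.descFactorial_eq_factorial_mul_choose] at this
    exact_mod_cast this
  have h2 : (t.factorial : ℝ) * (n.choose t : ℝ) ≤ (n : ℝ) ^ t := by
    have := Nat.descFactorial_le_pow n t
    rw [Nat.descFactorial_eq_factorial_mul_choose] at this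
    exact_mod_cast this
  have htk : (t:ℝ) ≤ k := by have : (0:ℝ) ≤ t := by positivity
                             linarith
  have htk' : t ≤ k := by exact_mod_cast htk
  have h3 : (ε / 2) * n ≤ ((k + 1 - t : ℕ) : ℝ) := by
    rw [Nat.cast_sub (by omega)]; push_cast; linarith
  have h4 : ((ε / 2) * n) ^ t ≤ ((k + 1 - t : ℕ) : ℝ) ^ t :=
    pow_le_pow_left₀ (by positivity) h3 t
  rw [mul_pow] at h4
  have h5 := mul_le_mul_of_nonneg_left h2 (show 0 ≤ (ε / 2) ^ t by positivity)
  refine le_of_mul_le_mul_left ?_ hf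
  linarith

lemma net_exp (δ : ℝ) (h0 : 0 ≤ δ) (h1 : δ ≤ 1) : Real.exp (δ / 2) ≤ 1 + δ := by
  have := Real.exp_bound_div_one_sub_of_interval (x := δ / 2) (by linarith) (by linarith)
  refine this.trans ?_
  rw [div_le_iff₀ (by linarith)]
  nlinarith

theorem eps_t_net_upper_bound (t : ℕ) (ht : 1 ≤ t) :
    ∃ c : ℝ, 0 < c ∧
      ∀ (V : Type) (_ : Fintype V) (_ : DecidableEq V) (E : Finset (Finset V)) (d : ℕ),
        IsVCDim E d → 1 ≤ d →
        ∀ ε : ℝ, ε ∈ Set.Ioo (0 : ℝ) 1 → 2 * (t : ℝ) / ε ≤ (Fintype.card V : ℝ) →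
          ∃ S : Finset (Finset V), IsEpsTNet E ε t S ∧
            (S.card : ℝ) ≤ c * ((d : ℝ) / ε ^ t) * Real.logb 2 (2 / ε) := by
  have htR : (1:ℝ) ≤ t := by exact_mod_cast ht
  have hlog8 : 1 ≤ Real.log (8 * t) := by
    rw [Real.le_log_iff_exp_le (by positivity)]
    have := Real.exp_one_lt_d9
    linarith
  refine ⟨5 * 2 ^ t * (Real.log (8 * t) + t), by positivity, ?_⟩
  intro V _ _ E d hE hd ε ⟨hε0, hε1⟩ hn
  have hdR : (1:ℝ) ≤ d := by exact_mod_cast hd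
  rw [div_le_iff₀ hε0, mul_comm (Fintype.card V : ℝ)] at hn
  set n := Fintype.card V with hndef
  set δ : ℝ := (ε / 2) ^ t with hδdef
  have hδ0 : 0 < δ := by positivity
  have hδ1 : δ ≤ 1 := pow_le_one₀ (by positivity) (by linarith)
  set Q : ℝ := (d / δ) * Real.log (8 * t / δ) with hQ
  have hlogδ : Real.log (8 * t / δ) = Real.log (8 * t) + t * Real.log (2 / ε) := by
    rw [Real.log_div (by positivity) hδ0.ne', hδdef, Real.log_pow,
      ← inv_div ε 2, Real.log_inv]
    ring
  have hL0 : 0 ≤ Real.log (2 / ε) := Real.log_nonneg (by rw [le_div_iff₀ hε0]; linarith)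
  have hlogδ1 : 1 ≤ Real.log (8 * t / δ) := by
    rw [hlogδ]
    have : 0 ≤ (t:ℝ) * Real.log (2 / ε) := by positivity
    linarith
  have hdδ : 1 ≤ d / δ := by rw [le_div_iff₀ hδ0]; linarith
  have hQ1 : 1 ≤ Q := one_le_mul_of_one_le_of_one_le hdδ hlogδ1
  set m := ⌊4 * Q⌋₊ + 1 with hm
  have hm1 : 4 * Q < m := by rw [hm]; push_cast; exact Nat.lt_floor_add_one _
  have hm2 : (m:ℝ) ≤ 5 * Q := by
    rw [hm]; push_cast
    have := Nat.floor_le (show 0 ≤ 4 * Q by linarith)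
    linarith
  let W := {s : Finset V // s.card = t}
  have hcardW : Fintype.card W = n.choose t := by
    simp [W, hndef]
  have htn : t ≤ n := by
    have : (t:ℝ) ≤ n := by
      have : ε * n ≤ n := by
        have : (0:ℝ) ≤ n := by positivity
        nlinarith
      linarith
    exact_mod_cast this
  have : Nonempty W := by
    rw [← Fintype.card_pos_iff, hcardW]; exact Nat.choose_pos htn
  let lift : Finset V → Finset W := fun e => Finset.univ.filter (fun s => s.1 ⊆ e)
  let F : Finset (Finset W) := (E.filter (fun e => ε * (n : ℝ) ≤ (e.card : ℝ))).image lift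
  have hliftcard : ∀ e, (lift e).card = e.card.choose t := by
    intro e
    rw [← Finset.card_powersetCard, ← Finset.card_map (Function.Embedding.subtype _)]
    congr 1
    ext s
    simp [lift, W, Finset.mem_powersetCard]
  set x : ℝ := δ / (8 * t) with hx
  have hx0 : 0 < x := by positivity
  have hx1 : x ≤ 1 := by rw [hx, div_le_one (by positivity)]; linarith
  obtain ⟨y, hy⟩ := net_exists F m ((1 + x) ^ (2 * m * t) / x ^ d) δ hδ0.le
    (by
      intro f hf
      obtain ⟨e, he, rfl⟩ := Finset.mem_image.1 hf
      rw [hcardW, hliftcard]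
      exact net_choose t n e.card ε hε0 (Finset.mem_filter.1 he).2 hn)
    (by
      intro z
      let U : Finset V := (netSupp z).biUnion (fun s => s.1)
      have hU : U.card ≤ 2 * m * t := by
        refine (Finset.card_biUnion_le_card_mul _ _ t (fun s _ => s.2.le)).trans ?_
        exact Nat.mul_le_mul_right _ (netSupp_card z)
      have hsub : F.image (· ∩ netSupp z) ⊆
          (E.image (· ∩ U)).image (fun e => lift e ∩ netSupp z) := by
        intro h hh
        obtain ⟨f, hf, rfl⟩ := Finset.mem_image.1 hh
        obtain ⟨e, he, rfl⟩ := Finset.mem_image.1 hf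
        refine Finset.mem_image.2 ⟨e ∩ U, Finset.mem_image_of_mem _ (Finset.mem_filter.1 he).1, ?_⟩
        ext s
        simp only [lift, Finset.mem_inter, Finset.mem_filter, Finset.mem_univ, true_and]
        constructor
        · rintro ⟨h1, h2⟩; exact ⟨h1.trans Finset.inter_subset_left, h2⟩
        · rintro ⟨h1, h2⟩
          exact ⟨Finset.subset_inter h1 (Finset.subset_biUnion_of_mem (fun s : W => s.1) h2), h2⟩
      have hc : ((F.image (· ∩ netSupp z)).card : ℝ) ≤ ((E.image (· ∩ U)).card : ℝ) := by
        exact_mod_cast (Finset.card_le_card hsub).trans Finset.card_image_le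
      refine hc.trans ((net_sauer E d hE.2 U x hx0 hx1).trans ?_)
      gcongr
      linarith)
    (by
      have hxd : x ^ d = Real.exp (-(d * Real.log (8 * t / δ))) := by
        rw [← Real.exp_log (pow_pos hx0 d), Real.log_pow, hx, ← inv_div, Real.log_inv]
        ring_nf
      have hup : (1 + x) ^ (2 * m * t) ≤ Real.exp (δ * m / 4) := by
        calc (1 + x) ^ (2 * m * t) ≤ (Real.exp x) ^ (2 * m * t) := by
              gcongr
              linarith [Real.add_one_le_exp x]
          _ = Real.exp (δ * m / 4) := by
              rw [← Real.exp_nat_mul]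
              congr 1
              rw [hx]; push_cast; field_simp; ring
      have hlow : Real.exp (δ * m / 2) ≤ (1 + δ) ^ m := by
        calc Real.exp (δ * m / 2) = (Real.exp (δ / 2)) ^ m := by
              rw [← Real.exp_nat_mul]; congr 1; ring
          _ ≤ _ := by gcongr; exact net_exp δ hδ0.le hδ1
      refine lt_of_lt_of_le ?_ hlow
      rw [div_lt_iff₀ (by positivity)]
      refine lt_of_le_of_lt hup ?_
      rw [hxd, ← Real.exp_add, Real.exp_lt_exp]
      have : 4 * (d * Real.log (8 * t / δ)) < δ * m := by
        have h := mul_lt_mul_of_pos_left hm1 hδ0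
        have e : δ * (4 * Q) = 4 * (d * Real.log (8 * t / δ)) := by
          rw [hQ]; field_simp
        rwa [e] at h
      linarith)
  refine ⟨Finset.univ.image (fun i => (y i).1), ⟨?_, ?_⟩, ?_⟩
  · intro s hs
    obtain ⟨i, -, rfl⟩ := Finset.mem_image.1 hs
    exact (y i).2
  · intro e he hecard
    obtain ⟨i, hi⟩ := hy (lift e)
      (Finset.mem_image_of_mem _ (Finset.mem_filter.2 ⟨he, hecard⟩))
    exact ⟨(y i).1, Finset.mem_image_of_mem _ (Finset.mem_univ i), (Finset.mem_filter.1 hi).2⟩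
  · have hS : ((Finset.univ.image (fun i => (y i).1)).card : ℝ) ≤ m := by
      have := Finset.card_image_le (s := (Finset.univ : Finset (Fin m))) (f := fun i => (y i).1)
      rw [Finset.card_univ, Fintype.card_fin] at this
      exact_mod_cast this
    refine hS.trans (hm2.trans ?_)
    have hB1 : 1 ≤ Real.logb 2 (2 / ε) := by
      rw [Real.le_logb_iff_rpow_le (by norm_num) (by positivity), Real.rpow_one,
        le_div_iff₀ hε0]
      linarith
    have hB2 : Real.log (2 / ε) ≤ Real.logb 2 (2 / ε) := by
      rw [Real.logb, le_div_iff₀ (Real.log_pos (by norm_num))]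
      have := Real.log_two_lt_d9
      nlinarith
    have hB3 : Real.log (8 * t / δ) ≤ (Real.log (8 * t) + t) * Real.logb 2 (2 / ε) := by
      rw [hlogδ]; nlinarith
    have hδ' : (d:ℝ) / δ = 2 ^ t * (d / ε ^ t) := by
      rw [hδdef, div_pow]; field_simp
    rw [hQ, hδ']
    calc _ ≤ 5 * (2 ^ t * (d / ε ^ t) * ((Real.log (8 * t) + t) * Real.logb 2 (2 / ε))) := by
          gcongr
      _ = _ := by ring
end

section
/- There is an absolute constant c > 0 with the following property: for every finite hypergraph H = (V,E) on n vertices with VC-dimension d ≥ 1 and every ε with 2/n < ε ≤ 1/2, there exist a positive integer k with k ≥ c·n²·ε⁴/(d·log₂(1/ε)) and a coloring of all 2-element subsets of V with k colors such that every hyperedge e ∈ E with |e| ≥ εn contains, for each of the k colors, a 2-element subset of that color. -/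
open Finset in
/-- Sauer–Shelah with a generating function bound on the number of traces. -/
theorem trace_bound {V : Type*} [DecidableEq V] (E : Finset (Finset V)) (d : ℕ)
    (hE : ∀ A : Finset V, _root_.Shatters E A → A.card ≤ d) (F : Finset (Finset V)) (hF : F ⊆ E)
    (U : Finset V) (l : ℝ) (hl : 0 < l) (hl1 : l ≤ 1) (m : ℕ) (hU : U.card ≤ m) :
    l ^ d * ((F.image (fun e => e ∩ U)).card : ℝ) ≤ (1 + l) ^ m := by
  set G := F.image (fun e => e ∩ U) with hG
  have h1 : (G.card : ℝ) ≤ G.shatterer.card := by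
    exact_mod_cast card_le_card_shatterer G
  have hsub : ∀ A ∈ G.shatterer, A ⊆ U ∧ A.card ≤ d := by
    intro A hA
    rw [mem_shatterer] at hA
    have hAU : A ⊆ U := by
      obtain ⟨t, ht, hAt⟩ := hA.exists_superset
      rw [hG, mem_image] at ht
      obtain ⟨e, _, rfl⟩ := ht
      exact hAt.trans inter_subset_right
    refine ⟨hAU, hE A ?_⟩
    intro B hB
    obtain ⟨u, hu, huB⟩ := hA hB
    rw [hG, mem_image] at hu
    obtain ⟨e, he, rfl⟩ := hu
    refine ⟨e, hF he, ?_⟩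
    rw [← huB]
    ext x
    simp only [mem_inter]
    constructor
    · rintro ⟨a, b⟩; exact ⟨a, b, hAU a⟩
    · rintro ⟨a, b, _⟩; exact ⟨a, b⟩
  calc l ^ d * (G.card : ℝ) ≤ l ^ d * G.shatterer.card := by gcongr
    _ = ∑ A ∈ G.shatterer, l ^ d := by simp [mul_comm]
    _ ≤ ∑ A ∈ G.shatterer, l ^ A.card := by
        apply sum_le_sum
        intro A hA
        exact pow_le_pow_of_le_one hl.le hl1 (hsub A hA).2
    _ ≤ ∑ A ∈ U.powerset, l ^ A.card := by
        apply sum_le_sum_of_subset_of_nonneg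
        · intro A hA
          exact mem_powerset.2 (hsub A hA).1
        · intros; positivity
    _ = (1 + l) ^ U.card := by
        have := Finset.sum_pow_mul_eq_add_pow l 1 U
        simp only [one_pow, mul_one] at this
        rw [this, add_comm]
    _ ≤ (1 + l) ^ m := pow_le_pow_right₀ (by linarith) hU

/-- Weight of a pair of membership bits. -/
def wt (q : Bool × Bool) : ℝ := if q.1 then 0 else if q.2 then 2 else 1

theorem wt_nonneg (q : Bool × Bool) : 0 ≤ wt q := by
  unfold wt; split_ifs <;> norm_num

/-- Conditional swap. -/
def cswap {β : Type*} (b : Bool) (q : β × β) : β × β := if b then q.swap else q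

theorem cswap_cswap {β : Type*} (b : Bool) (q : β × β) : cswap b (cswap b q) = q := by
  cases b <;> simp [cswap]

theorem wt_sum (q : Bool × Bool) : ∑ b : Bool, wt (cswap b q) ≤ 2 := by
  rcases q with ⟨a, b⟩
  cases a <;> cases b <;> norm_num [wt, cswap]

open Finset Classical in
/-- Trace of an index on a sample of pairs. -/
noncomputable def tr {β ι : Type*} (R : ι → β → Prop) {s : ℕ} (z : Fin s → β × β) (f : ι) :
    Fin s → Bool × Bool :=
  fun i => (decide (R f (z i).1), decide (R f (z i).2))

open Finset in
theorem net_core {β ι : Type*} [Fintype β] [Nonempty β] (R : ι → β → Prop) (F : Finset ι) (s : ℕ)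
    (δ T : ℝ) (hδ : 0 ≤ δ)
    (heavy : ∀ f ∈ F, δ * (Fintype.card β : ℝ) ≤ (Nat.card {b // R f b} : ℝ))
    (hT : ∀ z : Fin s → β × β, ((F.image (tr R z)).card : ℝ) ≤ T)
    (hlt : T < (1 + δ) ^ s) :
    ∃ x : Fin s → β, ∀ f ∈ F, ∃ i, R f (x i) := by
  classical
  by_contra! hcon
  choose g hgF hg using hcon
  set N : ℝ := (Fintype.card β : ℝ) with hN
  have hNpos : 0 < N := by rw [hN]; exact_mod_cast Fintype.card_pos
  let Ψ : (Fin s → β × β) → ℝ := fun z => ∑ τ ∈ F.image (tr R z), ∏ i, wt (τ i)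
  let sw : (Fin s → Bool) → (Fin s → β × β) ≃ (Fin s → β × β) := fun σ =>
    { toFun := fun z i => cswap (σ i) (z i)
      invFun := fun z i => cswap (σ i) (z i)
      left_inv := fun z => by funext i; exact cswap_cswap _ _
      right_inv := fun z => by funext i; exact cswap_cswap _ _ }
  have hA : ∀ τ : Fin s → Bool × Bool,
      ∑ σ : Fin s → Bool, ∏ i, wt (cswap (σ i) (τ i)) ≤ 2 ^ s := by
    intro τ
    rw [← Fintype.prod_sum (fun i b => wt (cswap b (τ i)))]
    calc ∏ i, ∑ b : Bool, wt (cswap b (τ i)) ≤ ∏ i : Fin s, (2 : ℝ) := by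
          apply prod_le_prod
          · intro i _; exact sum_nonneg (fun b _ => wt_nonneg _)
          · intro i _; exact wt_sum _
      _ = 2 ^ s := by simp
  have hB : ∀ x : Fin s → β,
      ((1 + δ) * N) ^ s ≤ ∑ y : Fin s → β, ∏ i, wt (tr R (fun i => (x i, y i)) (g x) i) := by
    intro x
    have e1 : ∀ y : Fin s → β, ∏ i, wt (tr R (fun i => (x i, y i)) (g x) i)
        = ∏ i, (if R (g x) (y i) then (2 : ℝ) else 1) := by
      intro y
      apply prod_congr rfl
      intro i _
      simp [wt, tr, hg x i]
    simp_rw [e1]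
    rw [← Fintype.prod_sum (fun (_ : Fin s) b => if R (g x) b then (2 : ℝ) else 1)]
    have e2 : (∑ b : β, if R (g x) b then (2 : ℝ) else 1) = N + (Nat.card {b // R (g x) b} : ℝ) := by
      have : ∀ b : β, (if R (g x) b then (2 : ℝ) else 1) = 1 + (if R (g x) b then (1 : ℝ) else 0) := by
        intro b; split_ifs <;> norm_num
      simp_rw [this, sum_add_distrib]
      simp [hN, Fintype.card_subtype]
    rw [e2]
    simp only [prod_const, card_univ, Fintype.card_fin]
    apply pow_le_pow_left₀ (by positivity)
    have := heavy (g x) (hgF x)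
    linarith
  have hlow : N ^ s * ((1 + δ) * N) ^ s ≤ ∑ z, Ψ z := by
    have e : ∑ z, Ψ z = ∑ x : Fin s → β, ∑ y : Fin s → β, Ψ (fun i => (x i, y i)) := by
      rw [← Fintype.sum_prod_type' (f := fun (x y : Fin s → β) => Ψ (fun i => (x i, y i)))]
      refine Fintype.sum_equiv (Equiv.arrowProdEquivProdArrow (Fin s) (fun _ => β) (fun _ => β)) _ _ ?_
      intro z
      rfl
    rw [e]
    calc N ^ s * ((1 + δ) * N) ^ s = ∑ x : Fin s → β, ((1 + δ) * N) ^ s := by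
          simp [hN]
      _ ≤ _ := by
          apply sum_le_sum
          intro x _
          refine (hB x).trans (sum_le_sum ?_)
          intro y _
          refine single_le_sum (f := fun τ : Fin s → Bool × Bool => ∏ i, wt (τ i)) ?_ ?_
          · intro τ _; exact prod_nonneg (fun i _ => wt_nonneg _)
          · exact mem_image_of_mem _ (hgF x)
  have hsw : ∀ σ z, Ψ (sw σ z) ≤ ∑ τ ∈ F.image (tr R z), ∏ i, wt (cswap (σ i) (τ i)) := by
    intro σ z
    have himg : F.image (tr R (sw σ z)) = (F.image (tr R z)).image (fun τ i => cswap (σ i) (τ i)) := by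
      rw [image_image]
      apply image_congr
      intro f _
      funext i
      simp only [tr, sw, Equiv.coe_fn_mk, Function.comp, cswap]
      by_cases hb : σ i = true <;> simp [hb]
    show ∑ τ ∈ F.image (tr R (sw σ z)), ∏ i, wt (τ i) ≤ _
    rw [himg, sum_image]
    intro a _ b _ hab
    funext i
    have := congrFun hab i
    simp only at this
    rw [← cswap_cswap (σ i) (a i), this, cswap_cswap]
  have hup : 2 ^ s * ∑ z, Ψ z ≤ 2 ^ s * (N ^ s * N ^ s * T) := by
    calc 2 ^ s * ∑ z, Ψ z = ∑ σ : Fin s → Bool, ∑ z, Ψ z := by simp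
      _ = ∑ σ : Fin s → Bool, ∑ z, Ψ (sw σ z) := by
          apply sum_congr rfl
          intro σ _
          exact (Equiv.sum_comp (sw σ) Ψ).symm
      _ ≤ ∑ σ : Fin s → Bool, ∑ z, ∑ τ ∈ F.image (tr R z), ∏ i, wt (cswap (σ i) (τ i)) := by
          gcongr with σ _ z _
          exact hsw σ z
      _ = ∑ z, ∑ τ ∈ F.image (tr R z), ∑ σ : Fin s → Bool, ∏ i, wt (cswap (σ i) (τ i)) := by
          rw [sum_comm]
          apply sum_congr rfl
          intro z _
          rw [sum_comm]
      _ ≤ ∑ z : Fin s → β × β, ∑ τ ∈ F.image (tr R z), (2 : ℝ) ^ s := by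
          gcongr with z _ τ _
          exact hA τ
      _ ≤ ∑ z : Fin s → β × β, T * 2 ^ s := by
          apply sum_le_sum
          intro z _
          rw [sum_const, nsmul_eq_mul]
          have := hT z
          gcongr
      _ = 2 ^ s * (N ^ s * N ^ s * T) := by
          simp [hN, mul_pow]; ring
  have hup' := le_of_mul_le_mul_left hup (by positivity)
  have h3 := hlow.trans hup'
  rw [mul_pow] at h3
  have h4 : (N ^ s * N ^ s) * (1 + δ) ^ s ≤ (N ^ s * N ^ s) * T := by linarith
  have h5 := le_of_mul_le_mul_left h4 (by positivity)
  linarith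

open Finset in
theorem pair_net {V : Type} [Fintype V] [DecidableEq V] (E : Finset (Finset V)) (d : ℕ)
    (hE : ∀ A : Finset V, _root_.Shatters E A → A.card ≤ d) (ε : ℝ) (hε : 0 < ε) (hε1 : ε ≤ 1 / 2)
    (hn : 2 < ε * (Fintype.card V : ℝ)) (s : ℕ)
    (hs : (32 / ε ^ 2) ^ d * (1 + ε ^ 2 / 32) ^ (4 * s) < (1 + ε ^ 2 / 3) ^ s)
    (A : Finset (Finset V)) (hA : (A.card : ℝ) ≤ ε ^ 2 * (Fintype.card V : ℝ) ^ 2 / 6) :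
    ∃ N : Finset (Finset V), Disjoint A N ∧ N.card ≤ s ∧
      ∀ e ∈ E, ε * (Fintype.card V : ℝ) ≤ (e.card : ℝ) → ∃ p ∈ N, p ⊆ e ∧ p.card = 2 := by
  classical
  set n : ℝ := (Fintype.card V : ℝ) with hn'
  set F := E.filter (fun e => ε * n ≤ (e.card : ℝ)) with hF
  rcases F.eq_empty_or_nonempty with hFe | hFne
  · refine ⟨∅, by simp, by simp, ?_⟩
    intro e he hh
    have : e ∈ F := by simp [hF, he, hh]
    simp [hFe] at this
  set W := (powersetCard 2 (univ : Finset V)) \ A with hW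
  have hWmem : ∀ p ∈ W, p.card = 2 ∧ p ∉ A := by
    intro p hp
    simp only [hW, mem_sdiff, mem_powersetCard] at hp
    exact ⟨hp.1.2, hp.2⟩
  let R : Finset V → {p // p ∈ W} → Prop := fun e p => p.1 ⊆ e
  have hcount : ∀ e ∈ F, ε ^ 2 * n ^ 2 / 6 ≤ (Nat.card {b // R e b} : ℝ) := by
    intro e he
    simp only [hF, mem_filter] at he
    have hc : (powersetCard 2 e \ A).card ≤ Nat.card {b // R e b} := by
      rw [← Fintype.card_coe, ← Nat.card_eq_fintype_card]
      refine Nat.card_le_card_of_injective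
        (fun p : {p // p ∈ powersetCard 2 e \ A} => (⟨⟨p.1, ?_⟩, ?_⟩ : {b // R e b})) ?_
      · have hp := p.2
        simp only [mem_sdiff, mem_powersetCard] at hp
        simp only [hW, mem_sdiff, mem_powersetCard]
        exact ⟨⟨subset_univ _, hp.1.2⟩, hp.2⟩
      · have hp := p.2
        simp only [mem_sdiff, mem_powersetCard] at hp
        exact hp.1.1
      · intro a b hab
        simp only [Subtype.mk.injEq] at hab
        exact Subtype.ext hab
    have hc2 : (e.card.choose 2 : ℝ) - A.card ≤ ((powersetCard 2 e \ A).card : ℝ) := by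
      have := le_card_sdiff A (powersetCard 2 e)
      rw [card_powersetCard] at this
      rw [sub_le_iff_le_add]
      exact_mod_cast (by omega : e.card.choose 2 ≤ (powersetCard 2 e \ A).card + A.card)
    have hc' : ((powersetCard 2 e \ A).card : ℝ) ≤ Nat.card {b // R e b} := by exact_mod_cast hc
    rw [Nat.cast_choose_two] at hc2
    have h3 : (3 : ℝ) ≤ e.card := by
      have : (2 : ℝ) < e.card := by linarith [he.2]
      have : 2 < e.card := by exact_mod_cast this
      exact_mod_cast this
    have hsq : (ε * n) ^ 2 ≤ (e.card : ℝ) ^ 2 := pow_le_pow_left₀ (by linarith) he.2 2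
    nlinarith
  have hWcard : (Fintype.card {p // p ∈ W} : ℝ) ≤ n ^ 2 / 2 := by
    rw [Fintype.card_coe]
    have : W.card ≤ (Fintype.card V).choose 2 := by
      refine (card_le_card sdiff_subset).trans ?_
      rw [card_powersetCard, card_univ]
    have h2 : (W.card : ℝ) ≤ ((Fintype.card V).choose 2 : ℕ) := by exact_mod_cast this
    rw [Nat.cast_choose_two, ← hn'] at h2
    have : 0 ≤ n := by rw [hn']; positivity
    nlinarith
  have hnpos : 0 < n := by
    by_contra h
    nlinarith
  have hne : Nonempty {p // p ∈ W} := by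
    obtain ⟨e, he⟩ := hFne
    have h1 := hcount e he
    have h2 : (0 : ℝ) < (Nat.card {b // R e b} : ℝ) := lt_of_lt_of_le (by positivity) h1
    have h3 : 0 < Nat.card {b // R e b} := by exact_mod_cast h2
    obtain ⟨⟨b, _⟩⟩ := (Nat.card_pos_iff.1 h3).1
    exact ⟨b⟩
  obtain ⟨x, hx⟩ := net_core R F s (ε ^ 2 / 3)
    ((32 / ε ^ 2) ^ d * (1 + ε ^ 2 / 32) ^ (4 * s)) (by positivity) (by
      intro e he
      refine le_trans ?_ (hcount e he)
      have : ε ^ 2 / 3 * (Fintype.card {p // p ∈ W} : ℝ) ≤ ε ^ 2 / 3 * (n ^ 2 / 2) := by gcongr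
      linarith) (by
      intro z
      set U : Finset V := univ.biUnion (fun i => (z i).1.1 ∪ (z i).2.1) with hU
      have hUc : U.card ≤ 4 * s := by
        refine card_biUnion_le.trans ?_
        calc ∑ i : Fin s, ((z i).1.1 ∪ (z i).2.1).card ≤ ∑ i : Fin s, 4 := by
              apply sum_le_sum
              intro i _
              refine (card_union_le _ _).trans ?_
              rw [(hWmem _ (z i).1.2).1, (hWmem _ (z i).2.2).1]
          _ = 4 * s := by simp [mul_comm]
      have hfac : F.image (tr R z) = (F.image (fun e => e ∩ U)).image (tr R z) := by
        rw [image_image]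
        apply image_congr
        intro e _
        funext i
        have hu1 : (z i).1.1 ⊆ U := by
          intro v hv
          rw [hU, mem_biUnion]
          exact ⟨i, mem_univ _, mem_union_left _ hv⟩
        have hu2 : (z i).2.1 ⊆ U := by
          intro v hv
          rw [hU, mem_biUnion]
          exact ⟨i, mem_univ _, mem_union_right _ hv⟩
        simp [tr, R, subset_inter_iff, hu1, hu2]
      have hle : ((F.image (tr R z)).card : ℝ) ≤ ((F.image (fun e => e ∩ U)).card : ℝ) := by
        rw [hfac]
        exact_mod_cast card_image_le
      refine hle.trans ?_
      have hb := trace_bound E d hE F (filter_subset _ _) U (ε ^ 2 / 32) (by positivity)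
        (by nlinarith) (4 * s) hUc
      have hinv : (32 / ε ^ 2) ^ d * (ε ^ 2 / 32) ^ d = 1 := by
        rw [← mul_pow]
        have : 32 / ε ^ 2 * (ε ^ 2 / 32) = 1 := by field_simp
        rw [this, one_pow]
      calc ((F.image (fun e => e ∩ U)).card : ℝ)
          = (32 / ε ^ 2) ^ d * ((ε ^ 2 / 32) ^ d * ((F.image (fun e => e ∩ U)).card : ℝ)) := by
            rw [← mul_assoc, hinv, one_mul]
        _ ≤ _ := by gcongr) hs
  refine ⟨univ.image (fun i => (x i).1), ?_, ?_, ?_⟩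
  · rw [disjoint_right]
    intro p hp
    rw [mem_image] at hp
    obtain ⟨i, _, rfl⟩ := hp
    exact (hWmem _ (x i).2).2
  · exact card_image_le.trans (by simp)
  · intro e he hh
    obtain ⟨i, hi⟩ := hx e (by simp [hF, he, hh])
    exact ⟨(x i).1, mem_image_of_mem _ (mem_univ i), hi, (hWmem _ (x i).2).1⟩

open Finset in
theorem iterate_nets {V : Type} [DecidableEq V] (F : Finset V → Prop)
    (s : ℕ) (M : ℝ)
    (hnet : ∀ A : Finset (Finset V), (A.card : ℝ) ≤ M → ∃ N : Finset (Finset V), Disjoint A N ∧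
      N.card ≤ s ∧ ∀ e, F e → ∃ p ∈ N, p ⊆ e ∧ p.card = 2) (j : ℕ) (hj : (j : ℝ) * s ≤ M) :
    ∃ (χ : Finset V → ℕ) (A : Finset (Finset V)), A.card ≤ j * s ∧
      ∀ e, F e → ∀ i < j, ∃ p ∈ A, p ⊆ e ∧ p.card = 2 ∧ χ p = i := by
  induction j with
  | zero => exact ⟨fun _ => 0, ∅, by simp, by simp⟩
  | succ j ih =>
    push_cast at hj
    have hj' : (j : ℝ) * s ≤ M := by
      have : (0 : ℝ) ≤ s := by positivity
      linarith
    obtain ⟨χ, A, hA, hχ⟩ := ih hj'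
    obtain ⟨N, hd, hN, hp⟩ := hnet A (le_trans (by exact_mod_cast hA) hj')
    refine ⟨fun p => if p ∈ N then j else χ p, A ∪ N, ?_, ?_⟩
    · refine (card_union_le _ _).trans ?_
      rw [add_mul, one_mul]
      omega
    · intro e he i hi
      rcases Nat.lt_succ_iff_lt_or_eq.1 hi with h | rfl
      · obtain ⟨p, hpA, h1, h2, h3⟩ := hχ e he i h
        refine ⟨p, mem_union_left _ hpA, h1, h2, ?_⟩
        simp [disjoint_left.1 hd hpA, h3]
      · obtain ⟨p, hpN, h1, h2⟩ := hp e he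
        exact ⟨p, mem_union_right _ hpN, h1, h2, by simp [hpN]⟩

/-- The numerical inequality for the net size. -/
theorem numeric (d : ℕ) (hd : 1 ≤ d) (ε : ℝ) (hε : 0 < ε) (hε1 : ε ≤ 1 / 2) (s : ℕ)
    (hs : 168 * (d : ℝ) * Real.logb 2 (1 / ε) / ε ^ 2 ≤ s) :
    (32 / ε ^ 2) ^ d * (1 + ε ^ 2 / 32) ^ (4 * s) < (1 + ε ^ 2 / 3) ^ s := by
  set L := Real.logb 2 (1 / ε) with hL
  have hlog2 : 0 < Real.log 2 := Real.log_pos (by norm_num)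
  have hlog21 : Real.log 2 < 1 := by linarith [Real.log_two_lt_d9]
  have hLe : Real.log (1 / ε) = L * Real.log 2 := by
    rw [hL, Real.logb]; field_simp
  have hL1 : 1 ≤ L := by
    rw [hL, Real.le_logb_iff_rpow_le (by norm_num) (by positivity), Real.rpow_one,
      le_div_iff₀ hε]
    linarith
  have hd' : (1 : ℝ) ≤ d := by exact_mod_cast hd
  have hlog : Real.log (32 / ε ^ 2) = 5 * Real.log 2 + 2 * (L * Real.log 2) := by
    have : (32 : ℝ) / ε ^ 2 = 2 ^ 5 * (1 / ε) ^ 2 := by field_simp; norm_num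
    rw [this, Real.log_mul (by positivity) (by positivity), Real.log_pow, Real.log_pow, hLe]
    norm_num
  have hlog7 : Real.log (32 / ε ^ 2) < 7 * L := by
    rw [hlog]; nlinarith
  have e1 : (32 / ε ^ 2) ^ d = Real.exp (d * Real.log (32 / ε ^ 2)) := by
    rw [Real.exp_nat_mul, Real.exp_log (by positivity)]
  have e2 : (1 + ε ^ 2 / 32) ^ (4 * s) ≤ Real.exp (s * (ε ^ 2 / 8)) := by
    calc (1 + ε ^ 2 / 32) ^ (4 * s) ≤ Real.exp (ε ^ 2 / 32) ^ (4 * s) := by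
          gcongr
          linarith [Real.add_one_le_exp (ε ^ 2 / 32)]
      _ = _ := by
          rw [← Real.exp_nat_mul]; congr 1; push_cast; ring
  have e3 : Real.exp (s * (ε ^ 2 / 6)) ≤ (1 + ε ^ 2 / 3) ^ s := by
    rw [Real.exp_nat_mul]
    gcongr
    have h := Real.add_one_le_exp (-(ε ^ 2 / 6))
    have h2 : Real.exp (ε ^ 2 / 6) * Real.exp (-(ε ^ 2 / 6)) = 1 := by
      rw [← Real.exp_add]; simp
    have h3 := Real.exp_pos (ε ^ 2 / 6)
    have h4 : ε ^ 2 ≤ 1 / 4 := by nlinarith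
    have h5 : 0 < ε ^ 2 := by positivity
    have h6 : Real.exp (ε ^ 2 / 6) * (1 - ε ^ 2 / 6) ≤ 1 := by
      rw [← h2]; gcongr; linarith
    have h7 : (1 : ℝ) ≤ (1 + ε ^ 2 / 3) * (1 - ε ^ 2 / 6) := by nlinarith
    exact le_of_mul_le_mul_right (h6.trans h7) (by linarith)
  refine lt_of_lt_of_le ?_ e3
  calc (32 / ε ^ 2) ^ d * (1 + ε ^ 2 / 32) ^ (4 * s)
      ≤ Real.exp (d * Real.log (32 / ε ^ 2)) * Real.exp (s * (ε ^ 2 / 8)) := by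
        rw [e1]; gcongr
    _ = Real.exp (d * Real.log (32 / ε ^ 2) + s * (ε ^ 2 / 8)) := by rw [Real.exp_add]
    _ < _ := by
        apply Real.exp_lt_exp.2
        rw [div_le_iff₀ (by positivity)] at hs
        have : (d : ℝ) * Real.log (32 / ε ^ 2) < d * (7 * L) := by gcongr
        linarith

theorem rainbow_pair_coloring :
    ∃ c : ℝ, 0 < c ∧
      ∀ (V : Type) (_ : Fintype V) (_ : DecidableEq V) (E : Finset (Finset V)) (d : ℕ),
        IsVCDim E d → 1 ≤ d →
        ∀ ε : ℝ, 2 / (Fintype.card V : ℝ) < ε → ε ≤ 1 / 2 →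
          ∃ k : ℕ, 0 < k ∧
            c * (Fintype.card V : ℝ) ^ 2 * ε ^ 4 / ((d : ℝ) * Real.logb 2 (1 / ε)) ≤ (k : ℝ) ∧
            ∃ χ : Finset V → Fin k,
              ∀ e ∈ E, ε * (Fintype.card V : ℝ) ≤ (e.card : ℝ) →
                ∀ col : Fin k, ∃ p ⊆ e, p.card = 2 ∧ χ p = col := by
  refine ⟨1 / 2100, by norm_num, ?_⟩
  intro V _ _ E d hVC hd ε hε hε1
  have hnpos : 0 < Fintype.card V := by
    obtain ⟨⟨A, _, hA⟩, _⟩ := hVC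
    have := A.card_le_univ
    omega
  set n : ℝ := (Fintype.card V : ℝ) with hn
  have hn0 : 0 < n := by rw [hn]; exact_mod_cast hnpos
  have hε0 : 0 < ε := lt_trans (by positivity) hε
  have hεn : 2 < ε * n := by rwa [div_lt_iff₀ hn0] at hε
  set L := Real.logb 2 (1 / ε) with hL
  have hL1 : 1 ≤ L := by
    rw [hL, Real.le_logb_iff_rpow_le (by norm_num) (by positivity), Real.rpow_one,
      le_div_iff₀ hε0]
    linarith
  have hd' : (1 : ℝ) ≤ d := by exact_mod_cast hd
  have hdL : 1 ≤ d * L := by nlinarith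
  set s := ⌈168 * (d : ℝ) * L / ε ^ 2⌉₊ with hs
  have hs1 : 168 * (d : ℝ) * L / ε ^ 2 ≤ s := Nat.le_ceil _
  have hs2 : (s : ℝ) ≤ 169 * (d * L) / ε ^ 2 := by
    have h1 : (s : ℝ) < 168 * (d : ℝ) * L / ε ^ 2 + 1 := Nat.ceil_lt_add_one (by positivity)
    have h2 : 1 ≤ d * L / ε ^ 2 := by
      rw [le_div_iff₀ (by positivity)]; nlinarith
    have h3 : 169 * (d * L) / ε ^ 2 = 168 * (d : ℝ) * L / ε ^ 2 + d * L / ε ^ 2 := by ring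
    linarith
  have hspos : (0 : ℝ) < s := lt_of_lt_of_le (by positivity) hs1
  set M : ℝ := ε ^ 2 * n ^ 2 / 6 with hM
  have hMpos : 0 < M := by positivity
  set j := ⌊M / s⌋₊ with hj
  have hjM : (j : ℝ) * s ≤ M := by
    have : (j : ℝ) ≤ M / s := Nat.floor_le (by positivity)
    rwa [le_div_iff₀ hspos] at this
  have hjlt : M / s < j + 1 := Nat.lt_floor_add_one _
  have hlb : 1 / 2100 * n ^ 2 * ε ^ 4 / (d * L) ≤ M / s / 2 := by
    rw [div_div, le_div_iff₀ (by positivity)]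
    calc 1 / 2100 * n ^ 2 * ε ^ 4 / (d * L) * (s * 2)
        ≤ 1 / 2100 * n ^ 2 * ε ^ 4 / (d * L) * (169 * (d * L) / ε ^ 2 * 2) := by gcongr
      _ = 338 / 2100 * (n ^ 2 * ε ^ 2) := by field_simp; ring
      _ ≤ M := by
        have : 0 ≤ n ^ 2 * ε ^ 2 := by positivity
        rw [hM]; linarith
  have hnet : ∀ A : Finset (Finset V), (A.card : ℝ) ≤ M → ∃ N : Finset (Finset V), Disjoint A N ∧
      N.card ≤ s ∧ ∀ e, (e ∈ E ∧ ε * n ≤ (e.card : ℝ)) → ∃ p ∈ N, p ⊆ e ∧ p.card = 2 := by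
    intro A hA
    obtain ⟨N, h1, h2, h3⟩ := pair_net E d hVC.2 ε hε0 hε1 hεn s
      (numeric d hd ε hε0 hε1 s hs1) A hA
    exact ⟨N, h1, h2, fun e he => h3 e he.1 he.2⟩
  rcases Nat.eq_zero_or_pos j with hj0 | hjpos
  · refine ⟨1, one_pos, ?_, fun _ => 0, ?_⟩
    · rw [hj0] at hjlt
      push_cast at hjlt ⊢
      linarith
    · intro e he hh col
      obtain ⟨N, _, _, h3⟩ := hnet ∅ (by simpa using hMpos.le)
      obtain ⟨p, _, h4, h5⟩ := h3 e ⟨he, hh⟩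
      exact ⟨p, h4, h5, Subsingleton.elim _ _⟩
  · obtain ⟨χ, A, _, hχ⟩ := iterate_nets (fun e => e ∈ E ∧ ε * n ≤ (e.card : ℝ)) s M hnet j hjM
    refine ⟨j, hjpos, ?_, fun p => if h : χ p < j then ⟨χ p, h⟩ else ⟨0, hjpos⟩, ?_⟩
    · have : (1 : ℝ) ≤ j := by exact_mod_cast hjpos
      linarith
    · intro e he hh col
      obtain ⟨p, _, h1, h2, h3⟩ := hχ e ⟨he, hh⟩ col.1 col.2
      refine ⟨p, h1, h2, ?_⟩
      have : χ p < j := by rw [h3]; exact col.2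
      simp [h3]
end
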